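/- arXiv:1710.10627 — 5 statements merged into one kernel-verified Lean document; each statement's English description precedes it below -/
import Mathlib

section
/- (Lemma 2.1 of the paper.) Under the stated hypotheses, (φ∘S)∘(φ∘S) = (S∘φ)∘(S∘φ) as linear maps of T (equation (16) of the paper). -/
open RealInnerProductSpace

/-! On the tangent space `T`, the Hopf identity reads `SφS = (α/2)(φS + Sφ) + φ - W ∧ φW`, where `W`
is the tangential part of `AN`. The claim `(φS)² = (Sφ)²` says that `φ` commutes with `SφS`, so it
suffices that `φ` commutes with each term on the right. It commutes with `φS + Sφ` because `φ²`
commutes with `S` when `ξ` is principal. As a derivation, `φ` sends `W ∧ φW` to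
`φW ∧ φW + W ∧ φ²W`, which vanishes since `φ²W = -W`. -/

theorem commute_mul_add_mul_iff {R : Type*} [NonUnitalRing R] {a b : R} :
    Commute a (a * b + b * a) ↔ Commute (a * a) b := by
  simp only [commute_iff_eq, mul_add, add_mul, mul_assoc, add_comm (a * (a * b)), add_right_inj]

section Wedge

variable {E : Type*} [NormedAddCommGroup E] [InnerProductSpace ℝ E]

/-- The endomorphism `v ∧ w : x ↦ ⟪x, v⟫ w - ⟪x, w⟫ v`, under the identification of bivectors with
skew-adjoint endomorphisms. It expresses the conjugation terms of the Hopf identity. -/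
noncomputable def wedgeEnd (v w : E) : Module.End ℝ E :=
  ((innerₗ E).flip v).smulRight w - ((innerₗ E).flip w).smulRight v

theorem wedgeEnd_apply (v w x : E) : wedgeEnd v w x = ⟪x, v⟫ • w - ⟪x, w⟫ • v := rfl

theorem inner_wedgeEnd_left (v w x y : E) :
    ⟪wedgeEnd v w x, y⟫ = ⟪x, v⟫ * ⟪y, w⟫ - ⟪x, w⟫ * ⟪y, v⟫ := by
  rw [wedgeEnd_apply, inner_sub_left, real_inner_smul_left, real_inner_smul_left,
    real_inner_comm y v, real_inner_comm y w]

theorem wedgeEnd_self (v : E) : wedgeEnd v v = 0 := sub_self _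

theorem wedgeEnd_neg_right (v w : E) : wedgeEnd v (-w) = -wedgeEnd v w := by
  ext x
  simp only [wedgeEnd_apply, LinearMap.neg_apply, inner_neg_right]
  module

theorem lie_wedgeEnd {f : Module.End ℝ E} (hf : ∀ x y, ⟪f x, y⟫ = -⟪x, f y⟫) (v w : E) :
    ⁅f, wedgeEnd v w⁆ = wedgeEnd (f v) w + wedgeEnd v (f w) := by
  ext x
  simp only [Ring.lie_def, LinearMap.sub_apply, LinearMap.add_apply, Module.End.mul_apply,
    wedgeEnd_apply, map_sub, map_smul, hf]
  module

theorem commute_wedgeEnd_map {f : Module.End ℝ E} (hf : ∀ x y, ⟪f x, y⟫ = -⟪x, f y⟫) {w : E}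
    (hw : f (f w) = -w) : Commute f (wedgeEnd w (f w)) := by
  rw [commute_iff_lie_eq, lie_wedgeEnd hf, hw, wedgeEnd_neg_right, wedgeEnd_self, wedgeEnd_self,
    neg_zero, add_zero]

end Wedge

section AlmostContact

variable {E : Type*} [NormedAddCommGroup E] [InnerProductSpace ℝ E] {φ S : Module.End ℝ E} {ξ : E}

theorem shape_mul_phi_mul_shape_eq_of_hopf {B : Module.End ℝ E} {α : ℝ}
    (h : ∀ x y, 2 * ⟪S (φ (S x)), y⟫ - α * ⟪φ (S x) + S (φ x), y⟫ - 2 * ⟪φ x, y⟫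
      + 2 * ⟪B x, y⟫ = 0) :
    S * φ * S = (α / 2) • (φ * S + S * φ) + φ - B := by
  ext x
  refine ext_inner_right ℝ fun y => ?_
  simp only [LinearMap.sub_apply, LinearMap.add_apply, LinearMap.smul_apply,
    Module.End.mul_apply, inner_sub_left, inner_add_left, real_inner_smul_left] at h ⊢
  linarith [h x y]

theorem commute_sq_of_principal (hφφ : ∀ x, φ (φ x) = -x + ⟪x, ξ⟫ • ξ) {α : ℝ}
    (hSξ : S ξ = α • ξ) (hξS : ∀ x, ⟪S x, ξ⟫ = α * ⟪x, ξ⟫) : Commute (φ * φ) S := by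
  ext x
  simp only [Module.End.mul_apply, hφφ, map_add, map_neg, map_smul, hSξ, hξS]
  module

theorem commute_phi_shape_mul_phi_mul_shape (hφ : ∀ x y, ⟪φ x, y⟫ = -⟪x, φ y⟫)
    (hφφ : ∀ x, φ (φ x) = -x + ⟪x, ξ⟫ • ξ) {α c : ℝ} (hSξ : S ξ = α • ξ)
    (hξS : ∀ x, ⟪S x, ξ⟫ = α * ⟪x, ξ⟫) {W : E} (hW : ⟪W, ξ⟫ = 0)
    (hS : S * φ * S = c • (φ * S + S * φ) + φ - wedgeEnd W (φ W)) :
    Commute φ (S * φ * S) := by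
  have hφφW : φ (φ W) = -W := by rw [hφφ, hW, zero_smul, add_zero]
  have hanti : Commute φ (φ * S + S * φ) :=
    commute_mul_add_mul_iff.2 (commute_sq_of_principal hφφ hSξ hξS)
  rw [hS]
  exact ((hanti.smul_right c).add_right (Commute.refl φ)).sub_right
    (commute_wedgeEnd_map hφ hφφW)

end AlmostContact

section Compression

variable {V : Type*} [NormedAddCommGroup V] [InnerProductSpace ℝ V]

/-- The compression of an endomorphism `f` of `V` to a subspace `T`: apply `f`, then project
orthogonally back to `T`. For `f` the Kähler structure and `T` the tangent space of a hypersurface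
this is the induced tensor `φ`. -/
noncomputable def compression (T : Submodule ℝ V) [T.HasOrthogonalProjection]
    (f : Module.End ℝ V) : Module.End ℝ T :=
  T.orthogonalProjectionOnto.toLinearMap ∘ₗ f ∘ₗ T.subtype

theorem compression_apply (T : Submodule ℝ V) [T.HasOrthogonalProjection]
    (f : Module.End ℝ V) (x : T) : compression T f x = T.orthogonalProjectionOnto (f x) := rfl

theorem inner_compression_left_of_skew (T : Submodule ℝ V) [T.HasOrthogonalProjection]
    {f : Module.End ℝ V} (hf : ∀ x y, ⟪f x, y⟫ = -⟪x, f y⟫) (x y : T) :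
    ⟪compression T f x, y⟫ = -⟪x, compression T f y⟫ := by
  simp only [compression_apply, Submodule.inner_orthogonalProjectionOnto_eq_of_mem_left,
    Submodule.inner_orthogonalProjectionOnto_eq_of_mem_right, hf]

theorem coe_orthogonalProjectionOnto_orthogonal_singleton {N : V} (hN : ‖N‖ = 1) (x : V) :
    ((ℝ ∙ N)ᗮ.orthogonalProjectionOnto x : V) = x - ⟪N, x⟫ • N := by
  rw [Submodule.coe_orthogonalProjectionOnto_apply, Submodule.starProjection_orthogonal_val,
    Submodule.starProjection_unit_singleton ℝ hN]

end Compression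

section ComplexStructure

variable {V : Type*} [NormedAddCommGroup V] [InnerProductSpace ℝ V] {J : Module.End ℝ V} {N : V}

theorem inner_map_left_of_isometry_of_sq (hJ : ∀ x y, ⟪J x, J y⟫ = ⟪x, y⟫)
    (hJJ : ∀ x, J (J x) = -x) (x y : V) : ⟪J x, y⟫ = -⟪x, J y⟫ := by
  rw [← hJ x (J y), hJJ, inner_neg_right, neg_neg]

theorem inner_reeb_normal (hJ : ∀ x y, ⟪J x, y⟫ = -⟪x, J y⟫) {ξ : V} (hξ : ξ = -J N) :
    ⟪ξ, N⟫ = 0 := by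
  rw [hξ, inner_neg_left]
  linarith [hJ N N, real_inner_comm N (J N)]

theorem coe_compression_orthogonal_singleton (hJ : ∀ x y, ⟪J x, y⟫ = -⟪x, J y⟫) (hN : ‖N‖ = 1)
    (x : (ℝ ∙ N)ᗮ) : (compression (ℝ ∙ N)ᗮ J x : V) = J x + ⟪(x : V), J N⟫ • N := by
  rw [compression_apply, coe_orthogonalProjectionOnto_orthogonal_singleton hN, real_inner_comm, hJ,
    neg_smul, sub_neg_eq_add]

variable {ξ : (ℝ ∙ N)ᗮ}

theorem compression_orthogonalProjectionOnto (hJ : ∀ x y, ⟪J x, y⟫ = -⟪x, J y⟫)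
    (hJJ : ∀ x, J (J x) = -x) (hN : ‖N‖ = 1) (hξ : (ξ : V) = -J N) (b : V) :
    compression (ℝ ∙ N)ᗮ J ((ℝ ∙ N)ᗮ.orthogonalProjectionOnto b) =
      (ℝ ∙ N)ᗮ.orthogonalProjectionOnto (J b) - ⟪(ξ : V), J b⟫ • ξ := by
  have hξb : ⟪(ξ : V), J b⟫ = -⟪N, b⟫ := by
    rw [hξ, inner_neg_left, hJ, hJJ, inner_neg_right, neg_neg]
  have hJN : J N = -(ξ : V) := by rw [hξ, neg_neg]
  rw [compression_apply, coe_orthogonalProjectionOnto_orthogonal_singleton hN, hξb, map_sub,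
    map_smul, hJN, map_sub, map_smul, map_neg,
    Submodule.orthogonalProjectionOnto_mem_subspace_eq_self]
  module

theorem compression_compression_apply (hJ : ∀ x y, ⟪J x, y⟫ = -⟪x, J y⟫)
    (hJJ : ∀ x, J (J x) = -x) (hN : ‖N‖ = 1) (hξ : (ξ : V) = -J N) (x : (ℝ ∙ N)ᗮ) :
    compression (ℝ ∙ N)ᗮ J (compression (ℝ ∙ N)ᗮ J x) = -x + ⟪x, ξ⟫ • ξ := by
  rw [compression_apply _ J x, compression_orthogonalProjectionOnto hJ hJJ hN hξ, hJJ, map_neg,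
    Submodule.orthogonalProjectionOnto_mem_subspace_eq_self, inner_neg_right, neg_smul,
    sub_neg_eq_add, real_inner_comm, Submodule.coe_inner]

theorem inner_wedgeEnd_orthogonalProjectionOnto (hJ : ∀ x y, ⟪J x, y⟫ = -⟪x, J y⟫)
    (hJJ : ∀ x, J (J x) = -x) (hN : ‖N‖ = 1) (hξ : (ξ : V) = -J N) (b : V) (x y : (ℝ ∙ N)ᗮ) :
    ⟪wedgeEnd ((ℝ ∙ N)ᗮ.orthogonalProjectionOnto b)
        (compression (ℝ ∙ N)ᗮ J ((ℝ ∙ N)ᗮ.orthogonalProjectionOnto b)) x, y⟫ =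
      ⟪(x : V), b⟫ * ⟪(y : V), J b⟫ - ⟪(y : V), b⟫ * ⟪(x : V), J b⟫ +
        ⟪(ξ : V), J b⟫ * (⟪(y : V), b⟫ * ⟪(x : V), ξ⟫ - ⟪(x : V), b⟫ * ⟪(y : V), ξ⟫) := by
  rw [compression_orthogonalProjectionOnto hJ hJJ hN hξ, inner_wedgeEnd_left]
  simp only [inner_sub_right, real_inner_smul_right,
    Submodule.inner_orthogonalProjectionOnto_eq_of_mem_left]
  rw [Submodule.coe_inner, Submodule.coe_inner]
  ring

end ComplexStructure

theorem stmt6_general {V : Type*} [NormedAddCommGroup V] [InnerProductSpace ℝ V]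
    (J : V →ₗ[ℝ] V)
    (hJiso : ∀ x y : V, ⟪J x, J y⟫ = ⟪x, y⟫)
    (hJ2 : ∀ x : V, J (J x) = -x)
    (A : V →ₗ[ℝ] V)
    (hAJ : ∀ x : V, A (J x) = -(J (A x)))
    (N : V) (hN : ‖N‖ = 1)
    (ξ : V) (hξ : ξ = -(J N))
    (η : V → ℝ) (hη : ∀ X : V, η X = ⟪X, ξ⟫)
    (φ : V → V) (hφ : ∀ X : V, φ X = J X - η X • N)
    (S : V →ₗ[ℝ] V)
    (hST : ∀ X : V, ⟪X, N⟫ = 0 → ⟪S X, N⟫ = 0)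
    (hANξ : ⟪A N, ξ⟫ = 0)
    (α : ℝ) (hHopfξ : S ξ = α • ξ)
    (hSξ : ∀ X : V, ⟪X, N⟫ = 0 → ⟪S X, ξ⟫ = ⟪X, S ξ⟫)
    (hHopf : ∀ X Y : V, ⟪X, N⟫ = 0 → ⟪Y, N⟫ = 0 →
      2 * ⟪S (φ (S X)), Y⟫ - α * ⟪φ (S X) + S (φ X), Y⟫ - 2 * ⟪φ X, Y⟫
        + 2 * ⟪X, A N⟫ * ⟪Y, A ξ⟫ - 2 * ⟪Y, A N⟫ * ⟪X, A ξ⟫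
        + 2 * ⟪ξ, A ξ⟫ * (⟪Y, A N⟫ * η X - ⟪X, A N⟫ * η Y) = 0) :
    ∀ X : V, ⟪X, N⟫ = 0 → φ (S (φ (S X))) = S (φ (S (φ X))) := by
  have hJ := inner_map_left_of_isometry_of_sq hJiso hJ2
  have mem_T {X : V} : X ∈ (ℝ ∙ N)ᗮ ↔ ⟪X, N⟫ = 0 :=
    Submodule.mem_orthogonal_singleton_iff_inner_left
  have hξN : ⟪ξ, N⟫ = 0 := inner_reeb_normal hJ hξ
  have hAξ : A ξ = J (A N) := by rw [hξ, map_neg, hAJ, neg_neg]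
  let φT := compression (ℝ ∙ N)ᗮ J
  let ST : Module.End ℝ (ℝ ∙ N)ᗮ := S.restrict fun X hX => mem_T.2 (hST X (mem_T.1 hX))
  let ξT : (ℝ ∙ N)ᗮ := ⟨ξ, mem_T.2 hξN⟩
  let W := (ℝ ∙ N)ᗮ.orthogonalProjectionOnto (A N)
  have coe_φT (X : (ℝ ∙ N)ᗮ) : (φT X : V) = φ X := by
    rw [coe_compression_orthogonal_singleton hJ hN, hφ, hη, hξ, inner_neg_right, neg_smul,
      sub_neg_eq_add]
  have hW : ⟪W, ξT⟫ = 0 :=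
    (Submodule.inner_orthogonalProjectionOnto_eq_of_mem_right ξT (A N)).trans hANξ
  have hξTS (X : (ℝ ∙ N)ᗮ) : ⟪ST X, ξT⟫ = α * ⟪X, ξT⟫ := by
    rw [Submodule.coe_inner, Submodule.coe_inner, LinearMap.coe_restrict_apply,
      hSξ X (mem_T.1 X.2), hHopfξ, real_inner_smul_right]
  have hSφS : ST * φT * ST = (α / 2) • (φT * ST + ST * φT) + φT - wedgeEnd W (φT W) := by
    refine shape_mul_phi_mul_shape_eq_of_hopf fun X Y => ?_
    have h := hHopf X Y (mem_T.1 X.2) (mem_T.1 Y.2)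
    rw [hη, hη, hAξ] at h
    rw [inner_wedgeEnd_orthogonalProjectionOnto hJ hJ2 hN (ξ := ξT) hξ]
    simp only [Submodule.coe_inner, Submodule.coe_add, coe_φT, ST, LinearMap.coe_restrict_apply]
    linarith
  have hcomm : Commute φT (ST * φT * ST) :=
    commute_phi_shape_mul_phi_mul_shape (inner_compression_left_of_skew _ hJ)
      (compression_compression_apply hJ hJ2 hN hξ) (ξ := ξT) (Subtype.ext hHopfξ)
      hξTS hW hSφS
  intro X hX
  have h := congrArg Subtype.val (LinearMap.congr_fun hcomm.eq ⟨X, mem_T.2 hX⟩)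
  simpa [coe_φT, ST] using h

theorem stmt6 {V : Type*} [NormedAddCommGroup V] [InnerProductSpace ℝ V]
    [FiniteDimensional ℝ V]
    (m : ℕ) (hm : 3 ≤ m) (hdim : Module.finrank ℝ V = 2 * m)
    (J : V →ₗ[ℝ] V)
    (hJiso : ∀ x y : V, ⟪J x, J y⟫ = ⟪x, y⟫)
    (hJ2 : ∀ x : V, J (J x) = -x)
    (A : V →ₗ[ℝ] V)
    (hAsa : ∀ x y : V, ⟪A x, y⟫ = ⟪x, A y⟫)
    (hA2 : ∀ x : V, A (A x) = x)
    (hAJ : ∀ x : V, A (J x) = -(J (A x)))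
    (N : V) (hN : ‖N‖ = 1)
    (ξ : V) (hξ : ξ = -(J N))
    (η : V → ℝ) (hη : ∀ X : V, η X = ⟪X, ξ⟫)
    (φ : V → V) (hφ : ∀ X : V, φ X = J X - η X • N)
    (S : V →ₗ[ℝ] V)
    (hST : ∀ X : V, ⟪X, N⟫ = 0 → ⟪S X, N⟫ = 0)
    (hSsa : ∀ X Y : V, ⟪X, N⟫ = 0 → ⟪Y, N⟫ = 0 → ⟪S X, Y⟫ = ⟪X, S Y⟫)
    (hANξ : ⟪A N, ξ⟫ = 0)
    (α : ℝ) (hHopfξ : S ξ = α • ξ)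
    (hHopf : ∀ X Y : V, ⟪X, N⟫ = 0 → ⟪Y, N⟫ = 0 →
      2 * ⟪S (φ (S X)), Y⟫ - α * ⟪φ (S X) + S (φ X), Y⟫ - 2 * ⟪φ X, Y⟫
        + 2 * ⟪X, A N⟫ * ⟪Y, A ξ⟫ - 2 * ⟪Y, A N⟫ * ⟪X, A ξ⟫
        + 2 * ⟪ξ, A ξ⟫ * (⟪Y, A N⟫ * η X - ⟪X, A N⟫ * η Y) = 0)
    :
    ∀ X : V, ⟪X, N⟫ = 0 → φ (S (φ (S X))) = S (φ (S (φ X))) :=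
  stmt6_general J hJiso hJ2 A hAJ N hN ξ hξ η hη φ hφ S hST hANξ α hHopfξ
    (fun X hX => hSsa X ξ hX (inner_reeb_normal (inner_map_left_of_isometry_of_sq hJiso hJ2) hξ))
    hHopf
end

section
/- (Algebraic core of Lemma 4.1 of the paper.) Let Q : T → T be the linear map determined by g(QX, Y) = Ric*(X,Y) for all X, Y ∈ T. If (φ∘S)∘(φ∘S) = (S∘φ)∘(S∘φ) and the star-Ricci operator commutes with φ, i.e. φ∘Q = Q∘φ on T, then AN = g(AN,N)·N with g(AN,N) = ±1; that is, N is an eigenvector of the conjugation A (N is U-principal). -/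
open RealInnerProductSpace

/-!
`⟪φX, φY⟫ = ⟪X, Y⟫` as soon as `Y` is orthogonal to the Reeb vector `ξ`. For such tangent `Y` and
any tangent `X`, commutation of `Q` with `φ` gives `Ric*(φX, φY) = Ric*(X, Y)`; the first term of
`Ric*` is unchanged in the same way, and so is the last because `(φS)² = (Sφ)²`. With `U = AN` this
leaves `⟪U, φX⟫ ⟪U, φY⟫ = ⟪U, X⟫ ⟪U, Y⟫`. The tangential part `B` of `U` satisfies
`⟪U, B⟫ = ‖B‖²` and `⟪U, φB⟫ = 0`, so taking `X = Y = B` gives `B = 0`.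
-/

section

variable {V : Type*} [NormedAddCommGroup V] [InnerProductSpace ℝ V]

/-- An orthogonal complex structure on a real inner product space: the value at one point of the
Kähler structure of the ambient manifold. -/
structure IsOrthogonalComplexStructure (J : V →ₗ[ℝ] V) : Prop where
  inner_map_map : ∀ x y : V, ⟪J x, J y⟫ = ⟪x, y⟫
  map_map : ∀ x : V, J (J x) = -x

/-- The Reeb vector `ξ` of a real hypersurface with unit normal `N`. -/
def reeb (J : V →ₗ[ℝ] V) (N : V) : V := -(J N)

/-- The structure tensor `φ` of the almost contact structure induced on a real hypersurface with
unit normal `N`, where `η = ⟪·, ξ⟫`. It is defined on the whole ambient space, not only on the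
tangent space `{X | ⟪X, N⟫ = 0}`. -/
def structureTensor (J : V →ₗ[ℝ] V) (N X : V) : V := J X - ⟪X, reeb J N⟫ • N

/-- The star-Ricci form `Ric*(X, Y)` of a real hypersurface with structure tensor `φ` and shape
operator `S`. In the complex quadric of complex dimension `m` with conjugation `A` and unit normal
`N`, the parameters are `c = m - 1` and `U = A N`. -/
def starRicciForm (c : ℝ) (φ S : V → V) (U X Y : V) : ℝ :=
  -2 * c * ⟪φ (φ X), Y⟫ - 2 * ⟪U, X⟫ * ⟪U, Y⟫ - ⟪φ (S (φ (S X))), Y⟫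

namespace IsOrthogonalComplexStructure

variable {J : V →ₗ[ℝ] V} {N U X Y : V}

theorem inner_map_left (hJ : IsOrthogonalComplexStructure J) (x y : V) :
    ⟪J x, y⟫ = -⟪x, J y⟫ := by
  rw [← hJ.inner_map_map x (J y), hJ.map_map, inner_neg_right, neg_neg]

theorem inner_self_map (hJ : IsOrthogonalComplexStructure J) (x : V) : ⟪x, J x⟫ = 0 := by
  have h := hJ.inner_map_left x x
  rw [real_inner_comm] at h
  linarith

theorem inner_normal_reeb (hJ : IsOrthogonalComplexStructure J) (N : V) : ⟪N, reeb J N⟫ = 0 := by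
  rw [reeb, inner_neg_right, hJ.inner_self_map, neg_zero]

theorem inner_map_normal (hJ : IsOrthogonalComplexStructure J) (N X : V) :
    ⟪J X, N⟫ = ⟪X, reeb J N⟫ := by
  rw [reeb, inner_neg_right, hJ.inner_map_left]

theorem inner_structureTensor_normal (hJ : IsOrthogonalComplexStructure J) (hN : ‖N‖ = 1)
    (X : V) : ⟪structureTensor J N X, N⟫ = 0 := by
  rw [structureTensor, inner_sub_left, real_inner_smul_left, hJ.inner_map_normal,
    real_inner_self_eq_norm_sq, hN, one_pow, mul_one, sub_self]

theorem inner_structureTensor_structureTensor (hJ : IsOrthogonalComplexStructure J)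
    (hN : ‖N‖ = 1) (X Y : V) :
    ⟪structureTensor J N X, structureTensor J N Y⟫ =
      ⟪X, Y⟫ - ⟪X, reeb J N⟫ * ⟪Y, reeb J N⟫ :=
  calc
    ⟪structureTensor J N X, structureTensor J N Y⟫ = ⟪structureTensor J N X, J Y⟫ := by
      rw [structureTensor.eq_def J N Y, inner_sub_right, real_inner_smul_right,
        hJ.inner_structureTensor_normal hN, mul_zero, sub_zero]
    _ = ⟪X, Y⟫ - ⟪X, reeb J N⟫ * ⟪Y, reeb J N⟫ := by
      rw [structureTensor, inner_sub_left, real_inner_smul_left, hJ.inner_map_map,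
        real_inner_comm (J Y) N, hJ.inner_map_normal]

theorem inner_structureTensor_structureTensor_of_inner_reeb_eq_zero
    (hJ : IsOrthogonalComplexStructure J) (hN : ‖N‖ = 1) (hY : ⟪Y, reeb J N⟫ = 0) (X : V) :
    ⟪structureTensor J N X, structureTensor J N Y⟫ = ⟪X, Y⟫ := by
  rw [hJ.inner_structureTensor_structureTensor hN, hY, mul_zero, sub_zero]

theorem inner_sub_smul_normal_reeb (hJ : IsOrthogonalComplexStructure J)
    (hU : ⟪U, reeb J N⟫ = 0) (a : ℝ) : ⟪U - a • N, reeb J N⟫ = 0 := by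
  rw [inner_sub_left, real_inner_smul_left, hU, hJ.inner_normal_reeb, mul_zero, sub_zero]

theorem inner_structureTensor_sub_smul_normal (hJ : IsOrthogonalComplexStructure J)
    (hU : ⟪U, reeb J N⟫ = 0) (a : ℝ) : ⟪U, structureTensor J N (U - a • N)⟫ = 0 := by
  have hJN : ⟪U, J N⟫ = 0 := by
    rwa [reeb, inner_neg_right, neg_eq_zero] at hU
  rw [structureTensor, hJ.inner_sub_smul_normal_reeb hU, zero_smul, sub_zero, map_sub,
    map_smul, inner_sub_right, real_inner_smul_right, hJ.inner_self_map, hJN, mul_zero, sub_zero]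

variable {c : ℝ} {S Q : V → V}

theorem inner_mul_inner_structureTensor (hJ : IsOrthogonalComplexStructure J) (hN : ‖N‖ = 1)
    (hQ : ∀ X Y : V, ⟪X, N⟫ = 0 → ⟪Y, N⟫ = 0 →
      ⟪Q X, Y⟫ = starRicciForm c (structureTensor J N) S U X Y)
    (hsq : structureTensor J N (S (structureTensor J N (S X))) =
      S (structureTensor J N (S (structureTensor J N X))))
    (hcomm : structureTensor J N (Q X) = Q (structureTensor J N X))
    (hX : ⟪X, N⟫ = 0) (hY : ⟪Y, N⟫ = 0) (hYξ : ⟪Y, reeb J N⟫ = 0) :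
    ⟪U, structureTensor J N X⟫ * ⟪U, structureTensor J N Y⟫ = ⟪U, X⟫ * ⟪U, Y⟫ := by
  have hφ := hJ.inner_structureTensor_structureTensor_of_inner_reeb_eq_zero hN hYξ
  have htan := hJ.inner_structureTensor_normal hN
  have hQinv : ⟪Q (structureTensor J N X), structureTensor J N Y⟫ = ⟪Q X, Y⟫ := by
    rw [← hcomm, hφ]
  rw [hQ _ _ (htan X) (htan Y), hQ X Y hX hY, starRicciForm, starRicciForm, hφ, hφ,
    ← hsq] at hQinv
  linarith

theorem eq_inner_normal_smul_of_comm (hJ : IsOrthogonalComplexStructure J) (hN : ‖N‖ = 1)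
    (hU : ⟪U, reeb J N⟫ = 0)
    (hQ : ∀ X Y : V, ⟪X, N⟫ = 0 → ⟪Y, N⟫ = 0 →
      ⟪Q X, Y⟫ = starRicciForm c (structureTensor J N) S U X Y)
    (hsq : ∀ X : V, ⟪X, N⟫ = 0 →
      structureTensor J N (S (structureTensor J N (S X))) =
        S (structureTensor J N (S (structureTensor J N X))))
    (hcomm : ∀ X : V, ⟪X, N⟫ = 0 → structureTensor J N (Q X) = Q (structureTensor J N X)) :
    U = ⟪U, N⟫ • N := by
  set B := U - ⟪U, N⟫ • N with hB
  have hBN : ⟪B, N⟫ = 0 := by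
    rw [hB, inner_sub_left, real_inner_smul_left, real_inner_self_eq_norm_sq, hN, one_pow,
      mul_one, sub_self]
  have hBξ : ⟪B, reeb J N⟫ = 0 := hJ.inner_sub_smul_normal_reeb hU _
  have hUB : ⟪U, B⟫ = ⟪B, B⟫ := by
    rw [← sub_eq_zero, ← inner_sub_left, hB, sub_sub_cancel, ← hB, real_inner_smul_left,
      real_inner_comm B N, hBN, mul_zero]
  have hUφB : ⟪U, structureTensor J N B⟫ = 0 := hJ.inner_structureTensor_sub_smul_normal hU _
  have hinv := hJ.inner_mul_inner_structureTensor hN hQ (hsq B hBN) (hcomm B hBN) hBN hBN hBξ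
  rw [hUφB, hUB, zero_mul, eq_comm, mul_self_eq_zero, inner_self_eq_zero] at hinv
  exact sub_eq_zero.mp hinv

end IsOrthogonalComplexStructure

theorem stmt8_general {J A : V →ₗ[ℝ] V} {N : V} {c : ℝ} {S Q : V → V}
    (hJ : IsOrthogonalComplexStructure J) (hA : A.IsSymmetric) (hA2 : ∀ x : V, A (A x) = x)
    (hN : ‖N‖ = 1) (hANξ : ⟪A N, reeb J N⟫ = 0)
    (hQ : ∀ X Y : V, ⟪X, N⟫ = 0 → ⟪Y, N⟫ = 0 →
      ⟪Q X, Y⟫ = starRicciForm c (structureTensor J N) S (A N) X Y)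
    (hsq : ∀ X : V, ⟪X, N⟫ = 0 →
      structureTensor J N (S (structureTensor J N (S X))) =
        S (structureTensor J N (S (structureTensor J N X))))
    (hcomm : ∀ X : V, ⟪X, N⟫ = 0 → structureTensor J N (Q X) = Q (structureTensor J N X)) :
    A N = ⟪A N, N⟫ • N ∧ (⟪A N, N⟫ = 1 ∨ ⟪A N, N⟫ = -1) := by
  have hAN : A N = ⟪A N, N⟫ • N := hJ.eq_inner_normal_smul_of_comm hN hANξ hQ hsq hcomm
  refine ⟨hAN, mul_self_eq_one_iff.mp ?_⟩
  calc
    ⟪A N, N⟫ * ⟪A N, N⟫ = ⟪A N, ⟪A N, N⟫ • N⟫ := (real_inner_smul_right _ _ _).symm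
    _ = ⟪A N, A N⟫ := by rw [← hAN]
    _ = ⟪N, A (A N)⟫ := hA N (A N)
    _ = 1 := by rw [hA2, real_inner_self_eq_norm_sq, hN, one_pow]

end

theorem stmt8 {V : Type*} [NormedAddCommGroup V] [InnerProductSpace ℝ V]
    [FiniteDimensional ℝ V]
    (m : ℕ) (hm : 3 ≤ m) (hdim : Module.finrank ℝ V = 2 * m)
    (J : V →ₗ[ℝ] V)
    (hJiso : ∀ x y : V, ⟪J x, J y⟫ = ⟪x, y⟫)
    (hJ2 : ∀ x : V, J (J x) = -x)
    (A : V →ₗ[ℝ] V)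
    (hAsa : ∀ x y : V, ⟪A x, y⟫ = ⟪x, A y⟫)
    (hA2 : ∀ x : V, A (A x) = x)
    (hAJ : ∀ x : V, A (J x) = -(J (A x)))
    (N : V) (hN : ‖N‖ = 1)
    (ξ : V) (hξ : ξ = -(J N))
    (η : V → ℝ) (hη : ∀ X : V, η X = ⟪X, ξ⟫)
    (φ : V → V) (hφ : ∀ X : V, φ X = J X - η X • N)
    (S : V →ₗ[ℝ] V)
    (hST : ∀ X : V, ⟪X, N⟫ = 0 → ⟪S X, N⟫ = 0)
    (hSsa : ∀ X Y : V, ⟪X, N⟫ = 0 → ⟪Y, N⟫ = 0 → ⟪S X, Y⟫ = ⟪X, S Y⟫)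
    (hANξ : ⟪A N, ξ⟫ = 0)
    (Ric : V → V → ℝ)
    (hRic : ∀ X Y : V, ⟪X, N⟫ = 0 → ⟪Y, N⟫ = 0 →
      Ric X Y = -2 * ((m : ℝ) - 1) * ⟪φ (φ X), Y⟫
        - 2 * ⟪A N, X⟫ * ⟪A N, Y⟫ - ⟪φ (S (φ (S X))), Y⟫)
    (Q : V →ₗ[ℝ] V)
    (hQT : ∀ X : V, ⟪X, N⟫ = 0 → ⟪Q X, N⟫ = 0)
    (hQ : ∀ X Y : V, ⟪X, N⟫ = 0 → ⟪Y, N⟫ = 0 → ⟪Q X, Y⟫ = Ric X Y)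
    (hsq : ∀ X : V, ⟪X, N⟫ = 0 → φ (S (φ (S X))) = S (φ (S (φ X))))
    (hcomm : ∀ X : V, ⟪X, N⟫ = 0 → φ (Q X) = Q (φ X)) :
    A N = ⟪A N, N⟫ • N ∧ (⟪A N, N⟫ = 1 ∨ ⟪A N, N⟫ = -1) := by
  obtain rfl : φ = structureTensor J N := funext fun X => by rw [hφ, hη, hξ, structureTensor, reeb]
  exact stmt8_general ⟨hJiso, hJ2⟩ hAsa hA2 hN (by rwa [reeb, ← hξ])
    (fun X Y hX hY => (hQ X Y hX hY).trans (hRic X Y hX hY)) hsq hcomm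
end

section
/- (Algebraic core of Lemma 6.3 of the paper.) Let α be a real number and suppose g(SX, φ(SY)) = α g(SX, φY) for all X, Y ∈ T. Then α·(S∘φ - φ∘S) = 0 on T; that is, either α = 0 or S commutes with φ (the Reeb flow is isometric). -/
open RealInnerProductSpace

/-!
On the tangent space the structure map `φ` is skew-adjoint, the shape operator `S` is self-adjoint,
and the hypothesis says `SφS = αSφ`. Taking adjoints turns this into `SφS = αφS`, so
`α(Sφ - φS) = 0`.
-/

open LinearMap (BilinForm)

section CommRing

variable {R M : Type*} [CommRing R] [AddCommGroup M] [Module R M] {B : BilinForm R M}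

theorem smul_lie_eq_zero_of_isSelfAdjoint_of_isSkewAdjoint (hB : B.SeparatingLeft)
    (hsymm : B.IsSymm) {A P : Module.End R M} (hA : B.IsSelfAdjoint A) (hP : B.IsSkewAdjoint P)
    {a : R} (h : ∀ x y, B (A x) (P (A y)) = a * B (A x) (P y)) :
    a • ⁅A, P⁆ = 0 := by
  have adjoint_swap (x y : M) : a * B (A (P x)) y = a * B (P (A x)) y :=
    calc a * B (A (P x)) y = a * B (A y) (P x) := by rw [hA, hsymm.eq]
      _ = B (A y) (P (A x)) := (h y x).symm
      _ = -B (A x) (P (A y)) := by rw [hsymm.eq, hP, Pi.neg_apply, map_neg]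
      _ = -(a * B (A x) (P y)) := by rw [h]
      _ = a * B (P (A x)) y := by rw [hP, Pi.neg_apply, map_neg, mul_neg]
  ext x
  refine hB _ fun y ↦ ?_
  simp [Ring.lie_def, mul_sub, adjoint_swap]

theorem mem_orthogonal_span_singleton_iff (hsymm : B.IsSymm) {x y : M} :
    y ∈ B.orthogonal (R ∙ x) ↔ B y x = 0 := by
  rw [LinearMap.BilinForm.mem_orthogonal_iff, hsymm.eq y x]
  refine ⟨fun h ↦ h x (Submodule.mem_span_singleton_self x), fun h z hz ↦ ?_⟩
  obtain ⟨c, rfl⟩ := Submodule.mem_span_singleton.1 hz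
  simp [h]

theorem isSkewAdjoint_of_isOrthogonal_of_apply_apply_eq_neg {J : M → M} (hJ : B.IsOrthogonal J)
    (hJ2 : ∀ x, J (J x) = -x) : B.IsSkewAdjoint J := fun x y ↦ by
  rw [← hJ (J x) y, hJ2, Pi.neg_apply, map_neg, LinearMap.neg_apply, map_neg]

/-- The structure map `φ X = J X - η(X) N`, `η(X) = B(X, ξ)`, `ξ = -J N`, of the almost contact
structure which `J` induces on a hypersurface with unit normal `N`. It is defined on the whole
ambient space. -/
def inducedContactMap (B : BilinForm R M) (J : M →ₗ[R] M) (N : M) : M →ₗ[R] M :=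
  J - (B.flip (-J N)).smulRight N

theorem inducedContactMap_apply (J : M →ₗ[R] M) (N X : M) :
    inducedContactMap B J N X = J X - B X (-J N) • N := rfl

variable {J : M →ₗ[R] M} {N : M}

theorem form_inducedContactMap_normal (hJ : B.IsSkewAdjoint J) (hN : B N N = 1) (X : M) :
    B (inducedContactMap B J N X) N = 0 := by
  simp [inducedContactMap_apply, hJ X N, hN]

theorem form_inducedContactMap_left (hsymm : B.IsSymm) (hJ : B.IsSkewAdjoint J) {X Y : M}
    (hX : B X N = 0) (hY : B Y N = 0) :
    B (inducedContactMap B J N X) Y = -B X (inducedContactMap B J N Y) := by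
  simp [inducedContactMap_apply, hJ X Y, hX, hsymm.eq N Y, hY]

end CommRing

theorem nondegenerate_innerₗ (E : Type*) [NormedAddCommGroup E] [InnerProductSpace ℝ E] :
    (innerₗ E).Nondegenerate :=
  ⟨fun x h ↦ inner_self_eq_zero.1 (h x), fun x h ↦ inner_self_eq_zero.1 (h x)⟩

theorem stmt13_general {K V : Type*} [Field K] [AddCommGroup V] [Module K V] {B : BilinForm K V}
    (hB : B.Nondegenerate) (hsymm : B.IsSymm) {J : V →ₗ[K] V} (hJ : B.IsSkewAdjoint J)
    {N : V} (hN : B N N = 1) {S : V →ₗ[K] V} (hST : ∀ X, B X N = 0 → B (S X) N = 0)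
    (hS : ∀ X Y, B X N = 0 → B Y N = 0 → B (S X) Y = B X (S Y)) {α : K}
    (h : ∀ X Y, B X N = 0 → B Y N = 0 →
      B (S X) (inducedContactMap B J N (S Y)) = α * B (S X) (inducedContactMap B J N Y)) :
    ∀ X, B X N = 0 →
      α • (S (inducedContactMap B J N X) - inducedContactMap B J N (S X)) = 0 := by
  let T := B.orthogonal (K ∙ N)
  have mem_T {X : V} : X ∈ T ↔ B X N = 0 := mem_orthogonal_span_singleton_iff hsymm
  have hT : (B.restrict T).Nondegenerate :=
    B.restrict_nondegenerate_orthogonal_spanSingleton hB hsymm.isRefl (hN ▸ one_ne_zero)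
  let A : Module.End K T := S.restrict fun X hX ↦ mem_T.2 (hST X (mem_T.1 hX))
  let P : Module.End K T := (inducedContactMap B J N).restrict fun X _ ↦
    mem_T.2 (form_inducedContactMap_normal hJ hN X)
  have hA : (B.restrict T).IsSelfAdjoint A := fun X Y ↦ hS X Y (mem_T.1 X.2) (mem_T.1 Y.2)
  have hP : (B.restrict T).IsSkewAdjoint P := fun X Y ↦ by
    rw [Pi.neg_apply, map_neg]
    exact form_inducedContactMap_left hsymm hJ (mem_T.1 X.2) (mem_T.1 Y.2)
  have hAP : α • ⁅A, P⁆ = 0 :=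
    smul_lie_eq_zero_of_isSelfAdjoint_of_isSkewAdjoint hT.1 (hsymm.restrict T) hA hP
      fun X Y ↦ h X Y (mem_T.1 X.2) (mem_T.1 Y.2)
  intro X hX
  exact congrArg Subtype.val (LinearMap.congr_fun hAP ⟨X, mem_T.2 hX⟩)

theorem stmt13 {V : Type*} [NormedAddCommGroup V] [InnerProductSpace ℝ V]
    [FiniteDimensional ℝ V]
    (m : ℕ) (hm : 3 ≤ m) (hdim : Module.finrank ℝ V = 2 * m)
    (J : V →ₗ[ℝ] V)
    (hJiso : ∀ x y : V, ⟪J x, J y⟫ = ⟪x, y⟫)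
    (hJ2 : ∀ x : V, J (J x) = -x)
    (N : V) (hN : ‖N‖ = 1)
    (ξ : V) (hξ : ξ = -(J N))
    (η : V → ℝ) (hη : ∀ X : V, η X = ⟪X, ξ⟫)
    (φ : V → V) (hφ : ∀ X : V, φ X = J X - η X • N)
    (S : V →ₗ[ℝ] V)
    (hST : ∀ X : V, ⟪X, N⟫ = 0 → ⟪S X, N⟫ = 0)
    (hSsa : ∀ X Y : V, ⟪X, N⟫ = 0 → ⟪Y, N⟫ = 0 → ⟪S X, Y⟫ = ⟪X, S Y⟫)
    (α : ℝ)
    (h : ∀ X Y : V, ⟪X, N⟫ = 0 → ⟪Y, N⟫ = 0 →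
      ⟪S X, φ (S Y)⟫ = α * ⟪S X, φ Y⟫) :
    ∀ X : V, ⟪X, N⟫ = 0 → α • (S (φ X) - φ (S X)) = 0 := by
  obtain rfl : φ = inducedContactMap (innerₗ V) J N := funext fun X ↦ by rw [hφ, hη, hξ]; rfl
  exact stmt13_general (nondegenerate_innerₗ V) ⟨isSymm_inner.eq⟩
    (isSkewAdjoint_of_isOrthogonal_of_apply_apply_eq_neg hJiso hJ2)
    (inner_self_eq_one_of_norm_eq_one hN) hST hSsa h
end

section
/- (Final step of the proof of Theorem 1.4, Section 5 of the paper.) Assume g(AN, N) = 0 and g(AN, ξ) = 0 (N is U-isotropic), Sξ = 0, and that for all X ∈ T one has (2m-1) S(φX) + g(X, AN) S(Aξ) + g(X, Aξ) S(AN) = 0 (equation (26) of the paper). Then S(Aξ) = 0, S(AN) = 0, and in fact S = 0 on all of T. -/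
open RealInnerProductSpace

/-
Put `U = AN` and `c = 2m - 1`. Since `A` anticommutes with `J`, `Aξ = JU`, so the identity only
involves the vector `U`, which is orthogonal to `N` and `ξ`. It is unchanged, up to sign, by the
substitution `(c, U) ↦ (-c, JU)`. Evaluating it at `X = U` gives `(c + ‖U‖²) S(JU) = 0`, and by this
symmetry `(c - ‖U‖²) S(U) = 0`. What remains of the identity is `S ∘ φ = 0` on the tangent space,
where `φ² = -id + η ⊗ ξ`; so `Sξ = 0` forces `S = 0`.
-/

section ContactStructure

variable {V : Type*} [NormedAddCommGroup V] [InnerProductSpace ℝ V] {J : V →ₗ[ℝ] V} {N U X : V}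

/-- The Reeb vector `ξ = -JN` of a hypersurface with normal `N`, for the complex structure `J`. -/
def reebVector (J : V →ₗ[ℝ] V) (N : V) : V :=
  -(J N)

/-- The almost contact structure `φX = JX - η(X)N` induced on a hypersurface with normal `N`. It is
defined on the whole ambient space; only its values on the orthogonal complement of `N` are
geometrically meaningful. -/
def almostContact (J : V →ₗ[ℝ] V) (N X : V) : V :=
  J X - ⟪X, reebVector J N⟫ • N

lemma inner_map_left_eq_neg_inner_map_right (hJiso : ∀ x y : V, ⟪J x, J y⟫ = ⟪x, y⟫)
    (hJ2 : ∀ x : V, J (J x) = -x) (x y : V) : ⟪J x, y⟫ = -⟪x, J y⟫ := by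
  rw [← hJiso x (J y), hJ2, inner_neg_right, neg_neg]

lemma inner_right_map_self_eq_zero (hJiso : ∀ x y : V, ⟪J x, J y⟫ = ⟪x, y⟫)
    (hJ2 : ∀ x : V, J (J x) = -x) (x : V) : ⟪x, J x⟫ = 0 := by
  have hskew := inner_map_left_eq_neg_inner_map_right hJiso hJ2 x x
  rw [real_inner_comm] at hskew
  exact self_eq_neg.mp hskew

lemma inner_map_normal (hJiso : ∀ x y : V, ⟪J x, J y⟫ = ⟪x, y⟫)
    (hJ2 : ∀ x : V, J (J x) = -x) (N X : V) : ⟪J X, N⟫ = ⟪X, reebVector J N⟫ := by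
  rw [inner_map_left_eq_neg_inner_map_right hJiso hJ2, reebVector, inner_neg_right]

lemma inner_map_reebVector (hJiso : ∀ x y : V, ⟪J x, J y⟫ = ⟪x, y⟫) (N X : V) :
    ⟪J X, reebVector J N⟫ = -⟪X, N⟫ := by
  rw [reebVector, inner_neg_right, hJiso]

lemma inner_normal_reebVector (hJiso : ∀ x y : V, ⟪J x, J y⟫ = ⟪x, y⟫)
    (hJ2 : ∀ x : V, J (J x) = -x) (N : V) : ⟪N, reebVector J N⟫ = 0 := by
  rw [reebVector, inner_neg_right, inner_right_map_self_eq_zero hJiso hJ2, neg_zero]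

lemma map_reebVector_of_anticommute {A : V →ₗ[ℝ] V} (hAJ : ∀ x : V, A (J x) = -(J (A x)))
    (N : V) : A (reebVector J N) = J (A N) := by
  rw [reebVector, map_neg, hAJ, neg_neg]

lemma norm_map_of_symmetric_involution {A : V →ₗ[ℝ] V} (hAsa : ∀ x y : V, ⟪A x, y⟫ = ⟪x, A y⟫)
    (hA2 : ∀ x : V, A (A x) = x) (x : V) : ‖A x‖ = ‖x‖ := by
  rw [← sq_eq_sq₀ (norm_nonneg _) (norm_nonneg _), ← real_inner_self_eq_norm_sq, hAsa, hA2,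
    real_inner_self_eq_norm_sq]

lemma almostContact_eq_map (hX : ⟪X, reebVector J N⟫ = 0) : almostContact J N X = J X := by
  rw [almostContact, hX, zero_smul, sub_zero]

lemma inner_almostContact_normal (hJiso : ∀ x y : V, ⟪J x, J y⟫ = ⟪x, y⟫)
    (hJ2 : ∀ x : V, J (J x) = -x) (hN : ‖N‖ = 1) (X : V) : ⟪almostContact J N X, N⟫ = 0 := by
  rw [almostContact, inner_sub_left, inner_map_normal hJiso hJ2, real_inner_smul_left,
    inner_self_eq_one_of_norm_eq_one hN, mul_one, sub_self]

lemma almostContact_almostContact (hJiso : ∀ x y : V, ⟪J x, J y⟫ = ⟪x, y⟫)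
    (hJ2 : ∀ x : V, J (J x) = -x) (N X : V) :
    almostContact J N (almostContact J N X) =
      -X + ⟪X, reebVector J N⟫ • reebVector J N + ⟪X, N⟫ • N := by
  have hη : ⟪almostContact J N X, reebVector J N⟫ = -⟪X, N⟫ := by
    rw [almostContact, inner_sub_left, inner_map_reebVector hJiso, real_inner_smul_left,
      inner_normal_reebVector hJiso hJ2, mul_zero, sub_zero]
  have hJφ : J (almostContact J N X) = -X + ⟪X, reebVector J N⟫ • reebVector J N := by
    rw [almostContact, map_sub, map_smul, hJ2, sub_eq_add_neg, ← smul_neg, ← reebVector]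
  rw [almostContact, hη, hJφ, neg_smul, sub_neg_eq_add]

end ContactStructure

section ShapeIdentity

variable {V W : Type*} [NormedAddCommGroup V] [InnerProductSpace ℝ V] [AddCommGroup W] [Module ℝ W]
  {J : V →ₗ[ℝ] V} {N U : V} {S : V →ₗ[ℝ] W} {c : ℝ}

lemma map_eq_zero_of_map_almostContact_eq_zero (hJiso : ∀ x y : V, ⟪J x, J y⟫ = ⟪x, y⟫)
    (hJ2 : ∀ x : V, J (J x) = -x) (hN : ‖N‖ = 1) (hSξ : S (reebVector J N) = 0)
    (hSφ : ∀ X : V, ⟪X, N⟫ = 0 → S (almostContact J N X) = 0) {X : V} (hX : ⟪X, N⟫ = 0) :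
    S X = 0 := by
  have hSφφ := hSφ _ (inner_almostContact_normal hJiso hJ2 hN X)
  rw [almostContact_almostContact hJiso hJ2, hX, zero_smul, add_zero, map_add, map_smul, hSξ,
    smul_zero, add_zero, map_neg] at hSφφ
  exact neg_eq_zero.mp hSφφ

/-- The identity `c S(φX) + g(X, U) S(JU) + g(X, JU) S(U) = 0` for all tangent vectors `X`.
Equation (26) of the paper is the case `c = 2m - 1` and `U = AN`, for which `JU = Aξ`. -/
def ShapeIdentity (J : V →ₗ[ℝ] V) (N : V) (S : V →ₗ[ℝ] W) (c : ℝ) (U : V) : Prop :=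
  ∀ X : V, ⟪X, N⟫ = 0 →
    c • S (almostContact J N X) + ⟪X, U⟫ • S (J U) + ⟪X, J U⟫ • S U = 0

namespace ShapeIdentity

lemma neg_map (h : ShapeIdentity J N S c U) (hJ2 : ∀ x : V, J (J x) = -x) :
    ShapeIdentity J N S (-c) (J U) := by
  intro X hX
  rw [hJ2, inner_neg_right, map_neg, ← neg_eq_zero, ← h X hX]
  module

lemma apply_map_eq_zero (h : ShapeIdentity J N S c U) (hJiso : ∀ x y : V, ⟪J x, J y⟫ = ⟪x, y⟫)
    (hJ2 : ∀ x : V, J (J x) = -x) (hUN : ⟪U, N⟫ = 0) (hUξ : ⟪U, reebVector J N⟫ = 0)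
    (hc : c + ‖U‖ ^ 2 ≠ 0) : S (J U) = 0 := by
  have hU := h U hUN
  rw [almostContact_eq_map hUξ, real_inner_self_eq_norm_sq,
    inner_right_map_self_eq_zero hJiso hJ2, zero_smul, add_zero, ← add_smul] at hU
  exact (smul_eq_zero.mp hU).resolve_left hc

lemma apply_eq_zero (h : ShapeIdentity J N S c U) (hJiso : ∀ x y : V, ⟪J x, J y⟫ = ⟪x, y⟫)
    (hJ2 : ∀ x : V, J (J x) = -x) (hUN : ⟪U, N⟫ = 0) (hUξ : ⟪U, reebVector J N⟫ = 0)
    (hc : c ≠ ‖U‖ ^ 2) : S U = 0 := by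
  have hJUN : ⟪J U, N⟫ = 0 := (inner_map_normal hJiso hJ2 N U).trans hUξ
  have hJUξ : ⟪J U, reebVector J N⟫ = 0 := by rw [inner_map_reebVector hJiso, hUN, neg_zero]
  have hc' : -c + ‖J U‖ ^ 2 ≠ 0 := by
    rw [← real_inner_self_eq_norm_sq, hJiso, real_inner_self_eq_norm_sq]
    exact fun h0 => hc (neg_add_eq_zero.mp h0)
  have hSJJU := (h.neg_map hJ2).apply_map_eq_zero hJiso hJ2 hJUN hJUξ hc'
  rwa [hJ2, map_neg, neg_eq_zero] at hSJJU

lemma apply_almostContact_eq_zero (h : ShapeIdentity J N S c U) (hc : c ≠ 0) (hSU : S U = 0)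
    (hSJU : S (J U) = 0) {X : V} (hX : ⟪X, N⟫ = 0) : S (almostContact J N X) = 0 := by
  have hcS := h X hX
  rw [hSU, hSJU, smul_zero, smul_zero, add_zero, add_zero] at hcS
  exact (smul_eq_zero.mp hcS).resolve_left hc

end ShapeIdentity

theorem stmt14_general (hJiso : ∀ x y : V, ⟪J x, J y⟫ = ⟪x, y⟫) (hJ2 : ∀ x : V, J (J x) = -x)
    (hN : ‖N‖ = 1) (hUN : ⟪U, N⟫ = 0) (hUξ : ⟪U, reebVector J N⟫ = 0)
    (hSξ : S (reebVector J N) = 0) (hc : c ≠ 0) (hcU : |c| ≠ ‖U‖ ^ 2)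
    (h : ShapeIdentity J N S c U) :
    S (J U) = 0 ∧ S U = 0 ∧ ∀ X : V, ⟪X, N⟫ = 0 → S X = 0 := by
  have hc_pos : c ≠ ‖U‖ ^ 2 := by
    rintro rfl
    exact hcU (abs_of_nonneg (sq_nonneg _))
  have hc_neg : c + ‖U‖ ^ 2 ≠ 0 := fun h0 => hcU <| by
    rw [eq_neg_of_add_eq_zero_left h0, abs_neg, abs_of_nonneg (sq_nonneg _)]
  have hSJU : S (J U) = 0 := h.apply_map_eq_zero hJiso hJ2 hUN hUξ hc_neg
  have hSU : S U = 0 := h.apply_eq_zero hJiso hJ2 hUN hUξ hc_pos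
  exact ⟨hSJU, hSU, fun _ => map_eq_zero_of_map_almostContact_eq_zero hJiso hJ2 hN hSξ
    fun _ => h.apply_almostContact_eq_zero hc hSU hSJU⟩

end ShapeIdentity

theorem stmt14 {V : Type*} [NormedAddCommGroup V] [InnerProductSpace ℝ V]
    [FiniteDimensional ℝ V]
    (m : ℕ) (hm : 3 ≤ m) (hdim : Module.finrank ℝ V = 2 * m)
    (J : V →ₗ[ℝ] V)
    (hJiso : ∀ x y : V, ⟪J x, J y⟫ = ⟪x, y⟫)
    (hJ2 : ∀ x : V, J (J x) = -x)
    (A : V →ₗ[ℝ] V)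
    (hAsa : ∀ x y : V, ⟪A x, y⟫ = ⟪x, A y⟫)
    (hA2 : ∀ x : V, A (A x) = x)
    (hAJ : ∀ x : V, A (J x) = -(J (A x)))
    (N : V) (hN : ‖N‖ = 1)
    (ξ : V) (hξ : ξ = -(J N))
    (η : V → ℝ) (hη : ∀ X : V, η X = ⟪X, ξ⟫)
    (φ : V → V) (hφ : ∀ X : V, φ X = J X - η X • N)
    (S : V →ₗ[ℝ] V)
    (hST : ∀ X : V, ⟪X, N⟫ = 0 → ⟪S X, N⟫ = 0)
    (hSsa : ∀ X Y : V, ⟪X, N⟫ = 0 → ⟪Y, N⟫ = 0 → ⟪S X, Y⟫ = ⟪X, S Y⟫)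
    (hANN : ⟪A N, N⟫ = 0) (hANξ : ⟪A N, ξ⟫ = 0) (hSξ : S ξ = 0)
    (h26 : ∀ X : V, ⟪X, N⟫ = 0 →
      (2 * (m : ℝ) - 1) • S (φ X) + ⟪X, A N⟫ • S (A ξ) + ⟪X, A ξ⟫ • S (A N) = 0) :
    S (A ξ) = 0 ∧ S (A N) = 0 ∧ (∀ X : V, ⟪X, N⟫ = 0 → S X = 0) := by
  obtain rfl : ξ = reebVector J N := hξ
  obtain rfl : φ = almostContact J N := funext fun X => (hφ X).trans (by rw [hη, almostContact])
  have hAN : ‖A N‖ ^ 2 = 1 := by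
    rw [norm_map_of_symmetric_involution hAsa hA2, hN, one_pow]
  have hc : 1 < 2 * (m : ℝ) - 1 := by
    have : (3 : ℝ) ≤ m := mod_cast hm
    linarith
  rw [map_reebVector_of_anticommute hAJ] at h26 ⊢
  exact stmt14_general hJiso hJ2 hN hANN hANξ hSξ (zero_lt_one.trans hc).ne'
    (hAN ▸ (hc.trans_le (le_abs_self _)).ne') h26
end

section
/- (Algebraic core of Case II in the proof of Theorem 1.6, Section 6 of the paper.) Assume g(AN, N) = 0 and g(AN, ξ) = 0 (N is U-isotropic). Then there is no self-adjoint linear map S : T → T satisfying simultaneously: Sξ = 0, SφSX = 0 for all X ∈ T, and the Hopf identity with α = 0, namely 2 g(SφSX, Y) - 2 g(φX, Y) + 2 g(X, AN) g(Y, Aξ) - 2 g(Y, AN) g(X, Aξ) + 2 g(ξ, Aξ)(g(Y, AN) η(X) - g(X, AN) η(Y)) = 0 for all X, Y ∈ T. (Indeed, these conditions would force g(φX, Y) = g(X,AN)g(Y,Aξ) - g(Y,AN)g(X,Aξ) for all X, Y ∈ T, which is impossible since m ≥ 3.) -/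
/-!
On `T = Nᗮ` the maps `φ` and `J` define the same bilinear form, because `φ X - J X` is a multiple of
`N`. If `S φ S = 0`, the Hopf identity therefore says that `⟪J X, Y⟫` is on `T` the alternating form
`u ∧ w` with `u = A N` and `w = A ξ - ⟪ξ, A ξ⟫ ξ`, whose rank is at most `2`. But an injective
skew-adjoint `J` maps every vector orthogonal to `N` and `J N` into `T`, so in dimension greater
than `4` some `X ≠ 0` is orthogonal to `N`, `J N`, `u` and `w`, and evaluating at `(X, J X)` gives
`‖J X‖ ^ 2 = 0`.
-/

open RealInnerProductSpace

theorem exists_ne_zero_forall_inner_eq_zero {𝕜 E : Type*} [RCLike 𝕜] [NormedAddCommGroup E]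
    [InnerProductSpace 𝕜 E] {s : Finset E} (hs : s.card < Module.rank 𝕜 E) :
    ∃ x : E, x ≠ 0 ∧ ∀ v ∈ s, inner 𝕜 x v = 0 := by
  have span_ne_top : Submodule.span 𝕜 (s : Set E) ≠ ⊤ := fun htop ↦
    (rank_span_finset_le s).not_gt (by rwa [htop, rank_top])
  obtain ⟨x, hx, hx0⟩ := Submodule.exists_mem_ne_zero_of_ne_bot
    (mt Submodule.orthogonal_eq_bot_iff.mp span_ne_top)
  exact ⟨x, hx0, fun v hv ↦ Submodule.inner_left_of_mem_orthogonal (Submodule.subset_span hv) hx⟩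

section RealInnerProductSpace

variable {V : Type*} [NormedAddCommGroup V] [InnerProductSpace ℝ V]

theorem inner_map_left_eq_neg_of_map_map_eq_neg {J : V → V}
    (hJiso : ∀ x y : V, ⟪J x, J y⟫ = ⟪x, y⟫) (hJ2 : ∀ x : V, J (J x) = -x) (x y : V) :
    ⟪J x, y⟫ = -⟪x, J y⟫ := by
  rw [← hJiso, hJ2, inner_neg_left]

theorem not_forall_inner_map_eq_wedge_of_skew (hV : 4 < Module.rank ℝ V) {J : V →ₗ[ℝ] V}
    (hJ : Function.Injective J) (hskew : ∀ x y : V, ⟪J x, y⟫ = -⟪x, J y⟫) (N u w : V) :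
    ¬ ∀ X Y : V, ⟪X, N⟫ = 0 → ⟪Y, N⟫ = 0 →
      ⟪J X, Y⟫ = ⟪X, u⟫ * ⟪Y, w⟫ - ⟪Y, u⟫ * ⟪X, w⟫ := by
  classical
  intro h
  have hcard : (({N, J N, u, w} : Finset V).card : Cardinal) < Module.rank ℝ V :=
    lt_of_le_of_lt (mod_cast Finset.card_le_four) hV
  obtain ⟨X, hX0, hX⟩ := exists_ne_zero_forall_inner_eq_zero hcard
  obtain ⟨hXN, hXJN, hXu, hXw⟩ : ⟪X, N⟫ = 0 ∧ ⟪X, J N⟫ = 0 ∧ ⟪X, u⟫ = 0 ∧ ⟪X, w⟫ = 0 := by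
    simpa using hX
  have hJXN : ⟪J X, N⟫ = 0 := by rw [hskew, hXJN, neg_zero]
  have hJX : ⟪J X, J X⟫ = 0 := by
    rw [h X (J X) hXN hJXN, hXu, hXw, zero_mul, mul_zero, sub_zero]
  exact hX0 ((map_eq_zero_iff J hJ).mp (inner_self_eq_zero.mp hJX))

theorem stmt16_general (hV : 4 < Module.rank ℝ V) {J : V →ₗ[ℝ] V}
    (hJ : Function.Injective J) (hskew : ∀ x y : V, ⟪J x, y⟫ = -⟪x, J y⟫)
    (A : V → V) (N ξ : V)
    (η : V → ℝ) (hη : ∀ X : V, η X = ⟪X, ξ⟫)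
    (φ : V → V) (hφ : ∀ X : V, φ X = J X - η X • N) :
    ¬ ∃ S : V → V,
      (∀ X : V, ⟪X, N⟫ = 0 → S (φ (S X)) = 0) ∧
      (∀ X Y : V, ⟪X, N⟫ = 0 → ⟪Y, N⟫ = 0 →
        2 * ⟪S (φ (S X)), Y⟫ - 2 * ⟪φ X, Y⟫
          + 2 * ⟪X, A N⟫ * ⟪Y, A ξ⟫ - 2 * ⟪Y, A N⟫ * ⟪X, A ξ⟫
          + 2 * ⟪ξ, A ξ⟫ * (⟪Y, A N⟫ * η X - ⟪X, A N⟫ * η Y) = 0) := by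
  rintro ⟨S, hS, hHopf⟩
  refine not_forall_inner_map_eq_wedge_of_skew hV hJ hskew N (A N) (A ξ - ⟪ξ, A ξ⟫ • ξ)
    fun X Y hX hY ↦ ?_
  have hφJ : ⟪φ X, Y⟫ = ⟪J X, Y⟫ := by
    rw [hφ, inner_sub_left, real_inner_smul_left, real_inner_comm Y N, hY, mul_zero, sub_zero]
  have hXY := hHopf X Y hX hY
  rw [hS X hX, inner_zero_left, hφJ, hη, hη] at hXY
  simp only [inner_sub_right, real_inner_smul_right]
  linear_combination -hXY / 2

end RealInnerProductSpace

theorem stmt16 {V : Type*} [NormedAddCommGroup V] [InnerProductSpace ℝ V]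
    [FiniteDimensional ℝ V]
    (m : ℕ) (hm : 3 ≤ m) (hdim : Module.finrank ℝ V = 2 * m)
    (J : V →ₗ[ℝ] V)
    (hJiso : ∀ x y : V, ⟪J x, J y⟫ = ⟪x, y⟫)
    (hJ2 : ∀ x : V, J (J x) = -x)
    (A : V →ₗ[ℝ] V)
    (hAsa : ∀ x y : V, ⟪A x, y⟫ = ⟪x, A y⟫)
    (hA2 : ∀ x : V, A (A x) = x)
    (hAJ : ∀ x : V, A (J x) = -(J (A x)))
    (N : V) (hN : ‖N‖ = 1)
    (ξ : V) (hξ : ξ = -(J N))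
    (η : V → ℝ) (hη : ∀ X : V, η X = ⟪X, ξ⟫)
    (φ : V → V) (hφ : ∀ X : V, φ X = J X - η X • N)
    (hANN : ⟪A N, N⟫ = 0) (hANξ : ⟪A N, ξ⟫ = 0) :
    ¬ ∃ S : V →ₗ[ℝ] V,
      (∀ X : V, ⟪X, N⟫ = 0 → ⟪S X, N⟫ = 0) ∧
      (∀ X Y : V, ⟪X, N⟫ = 0 → ⟪Y, N⟫ = 0 → ⟪S X, Y⟫ = ⟪X, S Y⟫) ∧
      S ξ = 0 ∧
      (∀ X : V, ⟪X, N⟫ = 0 → S (φ (S X)) = 0) ∧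
      (∀ X Y : V, ⟪X, N⟫ = 0 → ⟪Y, N⟫ = 0 →
        2 * ⟪S (φ (S X)), Y⟫ - 2 * ⟪φ X, Y⟫
          + 2 * ⟪X, A N⟫ * ⟪Y, A ξ⟫ - 2 * ⟪Y, A N⟫ * ⟪X, A ξ⟫
          + 2 * ⟪ξ, A ξ⟫ * (⟪Y, A N⟫ * η X - ⟪X, A N⟫ * η Y) = 0) := by
  rintro ⟨S, -, -, -, hS, hHopf⟩
  have hV : 4 < Module.rank ℝ V := mod_cast Module.lt_rank_of_lt_finrank (n := 4) (by omega)
  have hJ : Function.Injective J := fun x y hxy ↦ by simpa [hJ2] using congrArg J hxy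
  exact stmt16_general hV hJ (inner_map_left_eq_neg_of_map_map_eq_neg hJiso hJ2) A N ξ η hη φ hφ
    ⟨S, hS, hHopf⟩
end
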